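/- Let I ⊂ ℝ be an open interval, D ⊂ ℝⁿ a domain, and f ∈ C²(I × D) with ∂²f/∂t²(t, x) > 0 for all (t, x) ∈ I × D. Suppose that for each x ∈ D the function t ↦ f(t, x) attains its infimum over I at a (necessarily unique) point t(x) ∈ I, and set g(x) := f(t(x), x). Then for all x ∈ D: θ̃(∇²g(x)) = Θ̃(∇²f(t(x), x)) − π/2, where ∇²f denotes the full (n+1)×(n+1) Hessian of f in the variables (t, x) and ∇²g the n×n Hessian of g. -/

import Mathlib

open Real Filter Matrix

noncomputable section

/-- The Hessian matrix of a function `v : ℝ^m → ℝ` at `x`. -/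
def hessianMatrix {m : ℕ} (v : (Fin m → ℝ) → ℝ) (x : Fin m → ℝ) :
    Matrix (Fin m) (Fin m) ℝ :=
  Matrix.of fun i j => iteratedFDeriv ℝ 2 v x ![Pi.single i 1, Pi.single j 1]

/-- The lifted Lagrangian angle θ̃(A) = ∑ arctan λ_j(A) of a real symmetric matrix. -/
def liftedAngle {m : ℕ} (A : Matrix (Fin m) (Fin m) ℝ) : ℝ :=
  if h : A.IsHermitian then ∑ j, Real.arctan (h.eigenvalues j) else 0

/-- The Harvey–Lawson branches `F_c` of the special Lagrangian subequation. -/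
def Fc (m : ℕ) (c : ℝ) : Set (Matrix (Fin m) (Fin m) ℝ) :=
  {A | A.IsSymm ∧ c ≤ liftedAngle A}

/-- `I_n = diag(0,1,…,1)` as a complex `(n+1)×(n+1)` matrix. -/
def Inmat (n : ℕ) : Matrix (Fin (n+1)) (Fin (n+1)) ℂ :=
  Matrix.diagonal fun i => if i = 0 then 0 else 1

/-- The complex matrix `I_n + i A`. -/
def cmat {n : ℕ} (A : Matrix (Fin (n+1)) (Fin (n+1)) ℝ) :
    Matrix (Fin (n+1)) (Fin (n+1)) ℂ :=
  Inmat n + Complex.I • A.map (fun a => (a : ℂ))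

open Classical in
/-- The lifted space-time Lagrangian angle Θ̃, summing `Complex.arg` (with values in
`(-π, π]`) over the roots (with multiplicity) of the characteristic polynomial of
`I_n + i A`, shifted by `π/2` over the singular set `S = {det (I_n + iA) = 0}` where only
the nonzero roots are counted. -/
def spaceTimeAngle {n : ℕ} (A : Matrix (Fin (n+1)) (Fin (n+1)) ℝ) : ℝ :=
  if (cmat A).det = 0 then
    π / 2 + ((((cmat A).charpoly.roots).filter (fun z => z ≠ 0)).map Complex.arg).sum
  else (((cmat A).charpoly.roots).map Complex.arg).sum

/-- The degenerate special Lagrangian subequation `ℱ_c ⊂ Sym(ℝ^{n+1})`. -/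
def calF (n : ℕ) (c : ℝ) : Set (Matrix (Fin (n+1)) (Fin (n+1)) ℝ) :=
  {A | A.IsSymm ∧ c ≤ spaceTimeAngle A}

/-- Interior of a set of symmetric matrices, relative to the symmetric matrices. -/
def symInterior {m : ℕ} (F : Set (Matrix (Fin m) (Fin m) ℝ)) :
    Set (Matrix (Fin m) (Fin m) ℝ) :=
  {A | A.IsSymm ∧ ∀ᶠ B in nhds A, B.IsSymm → B ∈ F}

/-- The dual subequation `F̃ = (−Int F)ᶜ` (within the symmetric matrices). -/
def dualSub {m : ℕ} (F : Set (Matrix (Fin m) (Fin m) ℝ)) :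
    Set (Matrix (Fin m) (Fin m) ℝ) :=
  {A | A.IsSymm ∧ -A ∉ symInterior F}

/-- An `EReal`-valued (i.e. `[−∞,∞)`-valued) function is subaffine on `U` if, for every
affine function `a` and compact `K ⊆ U`, `u ≤ a` on `∂K` implies `u ≤ a` on `K`. -/
def IsSubaffine {m : ℕ} (U : Set (Fin m → ℝ)) (u : (Fin m → ℝ) → EReal) : Prop :=
  ∀ (a : (Fin m → ℝ) →ᵃ[ℝ] ℝ) (K : Set (Fin m → ℝ)), IsCompact K → K ⊆ U →
    (∀ x ∈ frontier K, u x ≤ (a x : EReal)) → ∀ x ∈ K, u x ≤ (a x : EReal)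

/-- `u` is of type `F` on `U` (i.e. `u ∈ F(U)`): `u` is `[−∞,∞)`-valued, upper
semicontinuous on `U`, and `u + v` is subaffine on `U` for every `C²` function `v`
whose Hessian lies in the dual subequation `F̃` at every point of `U`. -/
def IsTypeF {m : ℕ} (F : Set (Matrix (Fin m) (Fin m) ℝ)) (U : Set (Fin m → ℝ))
    (u : (Fin m → ℝ) → EReal) : Prop :=
  (∀ x ∈ U, u x ≠ ⊤) ∧ UpperSemicontinuousOn u U ∧
    ∀ v : (Fin m → ℝ) → ℝ, ContDiffOn ℝ 2 v U →
      (∀ x ∈ U, hessianMatrix v x ∈ dualSub F) →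
      IsSubaffine U (fun x => u x + ((v x : ℝ) : EReal))

/-- The lower-right `n×n` block `A⁺` of an `(n+1)×(n+1)` matrix. -/
def Aplus {n : ℕ} (A : Matrix (Fin (n+1)) (Fin (n+1)) ℝ) : Matrix (Fin n) (Fin n) ℝ :=
  Matrix.of fun i j => A i.succ j.succ

end

/-
Along the graph of `t` the time derivative of `f` vanishes, so by the implicit function theorem
`t` is `C¹`, and differentiating twice shows that `∇²g` is the Schur complement of the entry
`f_tt` in `A = ∇²f`. It remains to see that `Θ̃(A)` is the lifted angle of this Schur complement
`S` plus `π/2`. With the pivot `a = f_tt` and `S` fixed, `det (I_n + iA) = i a det (1 + iS)`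
does not depend on the border `b` of `A`. As `I_n ≥ 0`, the eigenvalues of `I_n + iA` have
nonnegative real part and, being nonzero, lie in the slit plane, so `Θ̃` is the imaginary part
of a continuous branch of `log det (I_n + iA)`. This branch is therefore constant in `b`, and at
`b = 0` the matrix splits into `i a` and `1 + iS`.
-/

section LogDet

variable {ι : Type*} [Fintype ι] [DecidableEq ι]

lemma det_smul_one_add_smul {K : Type*} [Field K] [IsAlgClosed K] (M : Matrix ι ι K) (c r : K) :
    (c • (1 : Matrix ι ι K) + r • M).det = (M.charpoly.roots.map fun z => c + r * z).prod := by
  have hsplits : M.charpoly.Splits := IsAlgClosed.splits _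
  have hcard : M.charpoly.roots.card = Fintype.card ι := by
    rw [← hsplits.natDegree_eq_card_roots, charpoly_natDegree_eq_dim]
  obtain rfl | hr := eq_or_ne r 0
  · simp [hcard]
  have hfactor : c • (1 : Matrix ι ι K) + r • M = (-r) • (scalar ι (-c / r) - M) := by
    rw [scalar_apply, ← smul_one_eq_diagonal, smul_sub, smul_smul]
    simp [mul_div_cancel₀ _ hr, sub_eq_add_neg]
  rw [hfactor, det_smul, ← eval_charpoly,
    hsplits.eval_eq_prod_roots_of_monic (charpoly_monic M), ← hcard, ← Multiset.prod_replicate,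
    ← Multiset.map_const', ← Multiset.prod_map_mul]
  refine congrArg Multiset.prod (Multiset.map_congr rfl fun z _ => ?_)
  field_simp
  ring

open Polynomial in
lemma roots_charpoly_smul_one_add_smul {K : Type*} [Field K] [IsAlgClosed K]
    (M : Matrix ι ι K) (c r : K) :
    (c • (1 : Matrix ι ι K) + r • M).charpoly.roots = M.charpoly.roots.map fun z => c + r * z := by
  have hcharpoly : (c • (1 : Matrix ι ι K) + r • M).charpoly =
      ((M.charpoly.roots.map fun z => c + r * z).map fun w => X - C w).prod := by
    refine Polynomial.funext fun z => ?_
    have hshift : scalar ι z - (c • (1 : Matrix ι ι K) + r • M) =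
        (z - c) • (1 : Matrix ι ι K) + (-r) • M := by
      rw [scalar_apply, ← smul_one_eq_diagonal]
      module
    rw [eval_charpoly, hshift, det_smul_one_add_smul, eval_multiset_prod, Multiset.map_map,
      Multiset.map_map]
    refine congrArg Multiset.prod (Multiset.map_congr rfl fun w _ => ?_)
    simp only [Function.comp_apply, eval_sub, eval_X, eval_C]
    ring
  rw [hcharpoly, roots_multiset_prod_X_sub_C]

/-- The branch of `log det M` given by the sum of the principal logarithms of the eigenvalues of
`M`, counted with algebraic multiplicity. -/
noncomputable def logDet (M : Matrix ι ι ℂ) : ℂ :=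
  (M.charpoly.roots.map Complex.log).sum

lemma im_logDet (M : Matrix ι ι ℂ) : (logDet M).im = (M.charpoly.roots.map Complex.arg).sum := by
  simpa [logDet, Function.comp_def, Complex.log_im] using
    map_multiset_sum Complex.imCLM (M.charpoly.roots.map Complex.log)

lemma exp_logDet {M : Matrix ι ι ℂ} (hM : M.det ≠ 0) : Complex.exp (logDet M) = M.det := by
  rw [det_eq_prod_roots_charpoly] at hM ⊢
  rw [logDet, Complex.exp_multiset_sum, Multiset.map_map]
  refine congrArg Multiset.prod ((Multiset.map_congr rfl fun z hz => ?_).trans (Multiset.map_id _))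
  exact Complex.exp_log fun hz0 => hM (Multiset.prod_eq_zero (hz0 ▸ hz))

lemma det_ne_zero_of_roots_mem_slitPlane {M : Matrix ι ι ℂ}
    (hM : ∀ z ∈ M.charpoly.roots, z ∈ Complex.slitPlane) : M.det ≠ 0 := by
  rw [det_eq_prod_roots_charpoly]
  exact Multiset.prod_ne_zero fun h0 => Complex.slitPlane_ne_zero (hM 0 h0) rfl

lemma isLocalHomeomorph_cexp : IsLocalHomeomorph Complex.exp := fun z =>
  ⟨_, ((Complex.hasStrictDerivAt_exp z).hasStrictFDerivAt_equiv
      (Complex.exp_ne_zero z)).mem_toOpenPartialHomeomorph_source, rfl⟩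

lemma one_sub_add_mul_mem_slitPlane {z : ℂ} (hz : z ∈ Complex.slitPlane) (r : unitInterval) :
    (1 - (r : ℂ)) + r * z ∈ Complex.slitPlane := by
  simpa using Complex.starConvex_one_slitPlane hz (sub_nonneg.2 r.2.2) r.2.1 (by ring)

lemma continuous_logDet_comp {X : Type*} [TopologicalSpace X] {M : X → Matrix ι ι ℂ}
    (hM : Continuous M) (hslit : ∀ x, ∀ z ∈ (M x).charpoly.roots, z ∈ Complex.slitPlane) :
    Continuous fun x => logDet (M x) := by
  -- Labelling the eigenvalues continuously is avoided by lifting `det` through `exp` along the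
  -- segment from `1` to `M x`: for fixed `x` the eigenvalues on it are explicit functions of `r`.
  let H : unitInterval × X → Matrix ι ι ℂ := fun p => (1 - (p.1 : ℂ)) • 1 + (p.1 : ℂ) • M p.2
  have hroots (p) : (H p).charpoly.roots =
      (M p.2).charpoly.roots.map fun z => (1 - (p.1 : ℂ)) + p.1 * z :=
    roots_charpoly_smul_one_add_smul _ _ _
  have hslitH (p) : ∀ z ∈ (H p).charpoly.roots, z ∈ Complex.slitPlane := by
    rw [hroots]
    simp only [Multiset.mem_map]
    rintro _ ⟨z, hz, rfl⟩
    exact one_sub_add_mul_mem_slitPlane (hslit p.2 z hz) p.1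
  have hlift : Continuous fun p => logDet (H p) := by
    refine isLocalHomeomorph_cexp.continuous_lift (T2Space.isSeparatedMap _)
      ⟨fun p => (H p).det, Continuous.matrix_det (by fun_prop)⟩
      (funext fun p => exp_logDet (det_ne_zero_of_roots_mem_slitPlane (hslitH p))) ?_ fun x => ?_
    · simpa [logDet, H, roots_charpoly_smul_one_add_smul] using continuous_const
    · simp only [logDet, hroots, Multiset.map_map]
      refine continuous_multiset_sum _ fun z hz => ?_
      change Continuous fun r : unitInterval => Complex.log ((1 - (r : ℂ)) + r * z)
      exact Continuous.clog (by fun_prop) (one_sub_add_mul_mem_slitPlane (hslit x z hz))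
  simpa [H, Function.comp_def] using hlift.comp (Continuous.prodMk_right 1)

lemma logDet_eq_of_det_eq {X : Type*} [TopologicalSpace X] [PreconnectedSpace X]
    {M : X → Matrix ι ι ℂ} (hM : Continuous M)
    (hslit : ∀ x, ∀ z ∈ (M x).charpoly.roots, z ∈ Complex.slitPlane)
    (hdet : ∀ x y, (M x).det = (M y).det) (x y : X) : logDet (M x) = logDet (M y) := by
  refine (T2Space.isSeparatedMap Complex.exp).const_of_comp
    isLocalHomeomorph_cexp.isLocallyInjective (continuous_logDet_comp hM hslit) (fun x y => ?_) x y
  rw [exp_logDet (det_ne_zero_of_roots_mem_slitPlane (hslit x)),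
    exp_logDet (det_ne_zero_of_roots_mem_slitPlane (hslit y)), hdet]

end LogDet

section SchurComplement

/-- The Schur complement of the upper left entry of a matrix; it presupposes that this pivot is
nonzero. -/
def schurComplement {n : ℕ} {K : Type*} [Field K] (M : Matrix (Fin (n + 1)) (Fin (n + 1)) K) :
    Matrix (Fin n) (Fin n) K :=
  of fun i j => M i.succ j.succ - M i.succ 0 * M 0 j.succ / M 0 0

lemma det_eq_mul_det_schurComplement {n : ℕ} {K : Type*} [Field K]
    {M : Matrix (Fin (n + 1)) (Fin (n + 1)) K} (hpivot : M 0 0 ≠ 0) :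
    M.det = M 0 0 * (schurComplement M).det := by
  let N : Matrix (Fin (n + 1)) (Fin (n + 1)) K :=
    of (Fin.cons (M 0) fun i j => M i.succ j - M i.succ 0 / M 0 0 * M 0 j)
  have hrow : M.det = N.det := by
    refine det_eq_of_forall_row_eq_smul_add_const
      (Fin.cons 0 fun i => M i.succ 0 / M 0 0) 0 rfl fun i j => ?_
    cases i using Fin.cases <;> simp [N]
  have hcol (i : Fin n) : N i.succ 0 = 0 := by simp [N, hpivot]
  have hminor : N.submatrix Fin.succ Fin.succ = schurComplement M := by
    ext i j
    simp [N, schurComplement, div_mul_eq_mul_div]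
  rw [hrow, det_succ_column_zero, Fin.sum_univ_succ]
  simp [hcol, hminor, show N 0 0 = M 0 0 from rfl]

open Polynomial in
lemma charpoly_eq_mul_of_col_zero {n : ℕ} {R : Type*} [CommRing R]
    {M : Matrix (Fin (n + 1)) (Fin (n + 1)) R} (hM : ∀ i : Fin n, M i.succ 0 = 0) :
    M.charpoly = (X - C (M 0 0)) * (M.submatrix Fin.succ Fin.succ).charpoly := by
  have hminor : M.charmatrix.submatrix Fin.succ Fin.succ =
      (M.submatrix Fin.succ Fin.succ).charmatrix := by
    ext i j : 2
    simp [charmatrix_apply, diagonal_apply]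
  rw [charpoly, det_succ_column_zero, Fin.sum_univ_succ]
  simp [hM, charpoly, hminor, Fin.succ_ne_zero]

/-- The matrix with pivot `a` in its upper left corner, border `b` along the rest of its first row
and column, and Schur complement `S` of that pivot. -/
noncomputable def ofSchurComplement {n : ℕ} (a : ℝ) (b : Fin n → ℝ) (S : Matrix (Fin n) (Fin n) ℝ) :
    Matrix (Fin (n + 1)) (Fin (n + 1)) ℝ :=
  of (Fin.cons (Fin.cons a b) fun i => Fin.cons (b i) fun j => S i j + b i * b j / a)

variable {n : ℕ} {a : ℝ} {S : Matrix (Fin n) (Fin n) ℝ}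

lemma isSymm_ofSchurComplement (hS : S.IsSymm) (b : Fin n → ℝ) :
    (ofSchurComplement a b S).IsSymm := by
  ext i j
  cases i using Fin.cases <;> cases j using Fin.cases <;>
    simp [ofSchurComplement, hS.apply, mul_comm]

lemma continuous_ofSchurComplement :
    Continuous fun b : Fin n → ℝ => ofSchurComplement a b S := by
  refine continuous_matrix fun i j => ?_
  cases i using Fin.cases <;> cases j using Fin.cases <;>
    simp only [ofSchurComplement, of_apply, Fin.cons_zero, Fin.cons_succ] <;> fun_prop

lemma ofSchurComplement_schurComplement {A : Matrix (Fin (n + 1)) (Fin (n + 1)) ℝ}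
    (hA : A.IsSymm) :
    ofSchurComplement (A 0 0) (fun i => A 0 i.succ) (schurComplement A) = A := by
  ext i j
  cases i using Fin.cases <;> cases j using Fin.cases <;>
    simp [ofSchurComplement, schurComplement, hA.apply 0]

lemma isSymm_schurComplement {A : Matrix (Fin (n + 1)) (Fin (n + 1)) ℝ} (hA : A.IsSymm) :
    (schurComplement A).IsSymm := by
  ext i j
  simp [schurComplement, hA.apply i.succ j.succ, hA.apply 0, mul_comm]

end SchurComplement

section SpaceTimeAngle

open scoped ComplexOrder

lemma re_nonneg_of_mem_roots_charpoly_add_I_smul {ι : Type*} [Fintype ι] [DecidableEq ι]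
    {P B : Matrix ι ι ℂ} (hP : P.PosSemidef) (hB : B.IsHermitian) {z : ℂ}
    (hz : z ∈ (P + Complex.I • B).charpoly.roots) : 0 ≤ z.re := by
  have hdet : (scalar ι z - (P + Complex.I • B)).det = 0 := by
    rw [← eval_charpoly]
    exact Polynomial.isRoot_of_mem_roots hz
  obtain ⟨v, hv, hker⟩ := exists_mulVec_eq_zero_iff.2 hdet
  have heigen : (P + Complex.I • B) *ᵥ v = z • v := by
    rw [sub_mulVec, sub_eq_zero, scalar_apply, ← smul_one_eq_diagonal, smul_mulVec,
      one_mulVec] at hker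
    exact hker.symm
  have hquad : z * (star v ⬝ᵥ v) = star v ⬝ᵥ (P *ᵥ v) + Complex.I * (star v ⬝ᵥ (B *ᵥ v)) := by
    rw [← smul_eq_mul, ← dotProduct_smul, ← heigen, add_mulVec, dotProduct_add, smul_mulVec,
      dotProduct_smul, smul_eq_mul]
  obtain ⟨hnorm_re, hnorm_im⟩ := Complex.lt_def.1 (dotProduct_star_self_pos_iff.2 hv)
  have hP_re : 0 ≤ (star v ⬝ᵥ (P *ᵥ v)).re := (Complex.le_def.1 (hP.dotProduct_mulVec_nonneg v)).1
  have hB_im : (star v ⬝ᵥ (B *ᵥ v)).im = 0 := hB.im_star_dotProduct_mulVec_self v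
  have hre := congrArg Complex.re hquad
  simp only [Complex.mul_re, Complex.add_re, Complex.I_re, Complex.I_im, hB_im,
    ← hnorm_im, Complex.zero_im] at hre
  refine nonneg_of_mul_nonneg_left ?_ hnorm_re
  linarith

lemma mem_slitPlane_of_mem_roots_charpoly_cmat {n : ℕ} {A : Matrix (Fin (n + 1)) (Fin (n + 1)) ℝ}
    (hA : A.IsSymm) (hdet : (cmat A).det ≠ 0) {z : ℂ} (hz : z ∈ (cmat A).charpoly.roots) :
    z ∈ Complex.slitPlane := by
  have hInmat : (Inmat n).PosSemidef := by
    refine PosSemidef.diagonal fun i => ?_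
    dsimp only
    split_ifs <;> simp
  have hherm : (A.map fun a => (a : ℂ)).IsHermitian := by
    ext i j
    simp [hA.apply i j]
  have hre := re_nonneg_of_mem_roots_charpoly_add_I_smul hInmat hherm hz
  have hz0 : z ≠ 0 := by
    rintro rfl
    exact hdet (by rw [det_eq_prod_roots_charpoly, Multiset.prod_eq_zero hz])
  obtain hpos | hzero := hre.lt_or_eq
  · exact Or.inl hpos
  · exact Or.inr fun him => hz0 (Complex.ext hzero.symm him)

lemma spaceTimeAngle_eq_im_logDet {n : ℕ} {A : Matrix (Fin (n + 1)) (Fin (n + 1)) ℝ}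
    (hdet : (cmat A).det ≠ 0) : spaceTimeAngle A = (logDet (cmat A)).im := by
  rw [spaceTimeAngle, if_neg hdet, im_logDet]

lemma arg_one_add_I_mul (x : ℝ) : (1 + Complex.I * x).arg = arctan x := by
  have hnorm : ‖1 + Complex.I * x‖ = √(1 + x ^ 2) := by
    rw [Complex.norm_def, Complex.normSq_apply]
    simp [pow_two]
  rw [Complex.arg_of_re_nonneg (by simp), arctan_eq_arcsin, hnorm]
  simp

lemma arg_I_mul {a : ℝ} (ha : a ≠ 0) : (Complex.I * a).arg = Real.sign a * (π / 2) := by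
  obtain hneg | hpos := ha.lt_or_gt
  · have hflip : Complex.I * a = (-a : ℝ) * -Complex.I := by push_cast; ring
    rw [hflip, Complex.arg_real_mul _ (neg_pos.2 hneg), Complex.arg_neg_I, sign_of_neg hneg]
    ring
  · rw [mul_comm, Complex.arg_real_mul _ hpos, Complex.arg_I, sign_of_pos hpos, one_mul]

lemma liftedAngle_eq_sum_roots {m : ℕ} {S : Matrix (Fin m) (Fin m) ℝ} (hS : S.IsSymm) :
    liftedAngle S = (S.charpoly.roots.map arctan).sum := by
  have hherm : S.IsHermitian := isHermitian_iff_isSymm.2 hS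
  rw [liftedAngle, dif_pos hherm, hherm.roots_charpoly_eq_eigenvalues, Multiset.map_map]
  rfl

lemma roots_charpoly_one_add_I_smul {m : ℕ} {S : Matrix (Fin m) (Fin m) ℝ} (hS : S.IsSymm) :
    (1 + Complex.I • S.map fun s => (s : ℂ)).charpoly.roots =
      S.charpoly.roots.map fun x : ℝ => 1 + Complex.I * (x : ℂ) := by
  have hherm : S.IsHermitian := isHermitian_iff_isSymm.2 hS
  have hroots : (S.map fun s => (s : ℂ)).charpoly.roots =
      S.charpoly.roots.map fun x : ℝ => (x : ℂ) := by
    change (S.map Complex.ofRealHom).charpoly.roots = _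
    rw [charpoly_map, hherm.splits_charpoly.roots_map]
    rfl
  simpa [hroots] using roots_charpoly_smul_one_add_smul (S.map fun s => (s : ℂ)) 1 Complex.I

variable {n : ℕ} {a : ℝ} {S : Matrix (Fin n) (Fin n) ℝ}

lemma det_cmat_ofSchurComplement (ha : a ≠ 0) (b : Fin n → ℝ) :
    (cmat (ofSchurComplement a b S)).det =
      Complex.I * a * (1 + Complex.I • S.map fun s => (s : ℂ)).det := by
  have hpivot : cmat (ofSchurComplement a b S) 0 0 = Complex.I * a := by
    simp [cmat, Inmat, ofSchurComplement]
  have hpivot_ne : Complex.I * (a : ℂ) ≠ 0 := by simpa using ha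
  have hschur : schurComplement (cmat (ofSchurComplement a b S)) =
      1 + Complex.I • S.map fun s => (s : ℂ) := by
    ext i j
    simp only [schurComplement, cmat, Inmat, ofSchurComplement, of_apply, Matrix.add_apply,
      Matrix.smul_apply, smul_eq_mul, map_apply, diagonal_apply, one_apply, Fin.cons_zero,
      Fin.cons_succ, Fin.succ_inj, Fin.succ_ne_zero, (Fin.succ_ne_zero _).symm, if_true, if_false,
      Complex.ofReal_add, Complex.ofReal_mul, Complex.ofReal_div]
    field_simp
    ring
  rw [det_eq_mul_det_schurComplement (hpivot ▸ hpivot_ne), hpivot, hschur]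

lemma roots_charpoly_cmat_ofSchurComplement_zero (hS : S.IsSymm) :
    (cmat (ofSchurComplement a 0 S)).charpoly.roots =
      (Complex.I * a) ::ₘ S.charpoly.roots.map fun x : ℝ => 1 + Complex.I * (x : ℂ) := by
  have hminor : (cmat (ofSchurComplement a 0 S)).submatrix Fin.succ Fin.succ =
      1 + Complex.I • S.map fun s => (s : ℂ) := by
    ext i j
    simp [cmat, Inmat, ofSchurComplement, diagonal_apply, one_apply]
  rw [charpoly_eq_mul_of_col_zero, hminor, Polynomial.roots_mul, Polynomial.roots_X_sub_C,
    roots_charpoly_one_add_I_smul hS, Multiset.singleton_add]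
  · simp [cmat, Inmat, ofSchurComplement]
  · exact mul_ne_zero (Polynomial.X_sub_C_ne_zero _) (charpoly_monic _).ne_zero
  · simp [cmat, Inmat, ofSchurComplement]

lemma det_cmat_ofSchurComplement_ne_zero (ha : a ≠ 0) (hS : S.IsSymm) (b : Fin n → ℝ) :
    (cmat (ofSchurComplement a b S)).det ≠ 0 := by
  have hfactor (x : ℝ) : 1 + Complex.I * (x : ℂ) ≠ 0 := fun h => by
    simpa using congrArg Complex.re h
  rw [det_cmat_ofSchurComplement ha, det_eq_prod_roots_charpoly, roots_charpoly_one_add_I_smul hS]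
  refine mul_ne_zero (by simpa using ha) (Multiset.prod_ne_zero ?_)
  simp [hfactor]

lemma spaceTimeAngle_ofSchurComplement (ha : a ≠ 0) (hS : S.IsSymm) (b : Fin n → ℝ) :
    spaceTimeAngle (ofSchurComplement a b S) = liftedAngle S + Real.sign a * (π / 2) := by
  have hdet := det_cmat_ofSchurComplement_ne_zero ha hS
  have hcont : Continuous fun b => cmat (ofSchurComplement a b S) :=
    continuous_const.add <|
      (continuous_ofSchurComplement.matrix_map Complex.continuous_ofReal).const_smul Complex.I
  have hlog : logDet (cmat (ofSchurComplement a b S)) = logDet (cmat (ofSchurComplement a 0 S)) :=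
    logDet_eq_of_det_eq hcont
      (fun b _ => mem_slitPlane_of_mem_roots_charpoly_cmat (isSymm_ofSchurComplement hS b) (hdet b))
      (fun b b' => by rw [det_cmat_ofSchurComplement ha, det_cmat_ofSchurComplement ha]) b 0
  rw [spaceTimeAngle_eq_im_logDet (hdet b), hlog, im_logDet,
    roots_charpoly_cmat_ofSchurComplement_zero hS, Multiset.map_cons, Multiset.sum_cons,
    arg_I_mul ha, liftedAngle_eq_sum_roots hS, Multiset.map_map, add_comm]
  simp only [Function.comp_def, arg_one_add_I_mul]

lemma spaceTimeAngle_eq_liftedAngle_schurComplement_add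
    {A : Matrix (Fin (n + 1)) (Fin (n + 1)) ℝ} (hA : A.IsSymm) (hpivot : A 0 0 ≠ 0) :
    spaceTimeAngle A = liftedAngle (schurComplement A) + Real.sign (A 0 0) * (π / 2) := by
  simpa only [ofSchurComplement_schurComplement hA] using spaceTimeAngle_ofSchurComplement hpivot
    (isSymm_schurComplement hA) fun i => A 0 i.succ

end SpaceTimeAngle

section ImplicitFunction

variable {𝕜 E₁ E₂ F : Type*} [RCLike 𝕜]
  [NormedAddCommGroup E₁] [NormedSpace 𝕜 E₁] [CompleteSpace E₁]
  [NormedAddCommGroup E₂] [NormedSpace 𝕜 E₂] [CompleteSpace E₂]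
  [NormedAddCommGroup F] [NormedSpace 𝕜 F] [CompleteSpace F]

open scoped ContDiff Topology

lemma eventuallyEq_implicitFunction {n : ℕ∞ω} {G : E₁ × E₂ → F} {t : E₁ → E₂} {x : E₁}
    (hG : ContDiffAt 𝕜 n G (x, t x)) (hn : n ≠ 0)
    (hinv : (fderiv 𝕜 G (x, t x) ∘L .inr 𝕜 E₁ E₂).IsInvertible)
    (hunique : ∀ᶠ p in 𝓝 (x, t x), G p = G (x, t x) → t p.1 = p.2) :
    t =ᶠ[𝓝 x] hG.implicitFunction hn hinv := by
  have hgraph : Tendsto (fun y => (y, hG.implicitFunction hn hinv y)) (𝓝 x) (𝓝 (x, t x)) := by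
    have hcont := (hG.contDiffAt_implicitFunction hn hinv).continuousAt
    rw [ContinuousAt, hG.implicitFunction_apply_self] at hcont
    exact tendsto_id.prodMk_nhds hcont
  filter_upwards [hgraph.eventually hunique, hG.eventually_apply_implicitFunction hn hinv]
    with y hy hGy using hy hGy

end ImplicitFunction

section CriticalBranch

variable {𝕜 E F G : Type*} [RCLike 𝕜] [NormedAddCommGroup E] [NormedSpace 𝕜 E]
  [NormedAddCommGroup F] [NormedSpace 𝕜 F] [NormedAddCommGroup G] [NormedSpace 𝕜 G]

open scoped Topology

lemma contDiffAt_fderiv_apply {f : F → G} {p : F} (hf : ContDiffAt 𝕜 2 f p) (v : F) :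
    ContDiffAt 𝕜 1 (fun q => fderiv 𝕜 f q v) p :=
  (hf.fderiv_right (m := 1) (by norm_num)).clm_apply contDiffAt_const

lemma differentiableAt_fderiv {f : F → G} {p : F} (hf : ContDiffAt 𝕜 2 f p) :
    DifferentiableAt 𝕜 (fderiv 𝕜 f) p :=
  (hf.fderiv_right (m := 1) (by norm_num)).differentiableAt one_ne_zero

lemma fderiv_fderiv_apply {f : F → G} {p : F} (hf : ContDiffAt 𝕜 2 f p) (u v : F) :
    fderiv 𝕜 (fun q => fderiv 𝕜 f q v) p u = fderiv 𝕜 (fderiv 𝕜 f) p u v := by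
  simp [fderiv_clm_apply (differentiableAt_fderiv hf) (differentiableAt_const v)]

lemma isInvertible_of_apply_one_ne_zero {L : 𝕜 →L[𝕜] 𝕜} (hL : L 1 ≠ 0) : L.IsInvertible :=
  ⟨ContinuousLinearEquiv.unitsEquivAut 𝕜 (Units.mk0 (L 1) hL), by ext; simp⟩

lemma apply_prodMk_eq (L : E × 𝕜 →L[𝕜] G) (u : E) (s : 𝕜) :
    L (u, s) = L (u, 0) + s • L (0, 1) := by
  rw [← map_smul, ← map_add]
  simp

variable {t : E → 𝕜} {x : E}

lemma contDiffAt_and_eventually_critical [CompleteSpace E] {f : E × 𝕜 → 𝕜}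
    (hf : ContDiffAt 𝕜 2 f (x, t x)) (hcrit : fderiv 𝕜 f (x, t x) (0, 1) = 0)
    (hnondeg : fderiv 𝕜 (fderiv 𝕜 f) (x, t x) (0, 1) (0, 1) ≠ 0)
    (hunique : ∀ᶠ p in 𝓝 (x, t x), fderiv 𝕜 f p (0, 1) = 0 → t p.1 = p.2) :
    ContDiffAt 𝕜 1 t x ∧ ∀ᶠ y in 𝓝 x, fderiv 𝕜 f (y, t y) (0, 1) = 0 := by
  have hpartial := contDiffAt_fderiv_apply hf (0, 1)
  have hinv : (fderiv 𝕜 (fun p => fderiv 𝕜 f p (0, 1)) (x, t x) ∘L .inr 𝕜 E 𝕜).IsInvertible :=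
    isInvertible_of_apply_one_ne_zero (by simpa [fderiv_fderiv_apply hf] using hnondeg)
  have heq := eventuallyEq_implicitFunction hpartial one_ne_zero hinv
    (by simpa only [hcrit] using hunique)
  refine ⟨(hpartial.contDiffAt_implicitFunction one_ne_zero hinv).congr_of_eventuallyEq heq, ?_⟩
  filter_upwards [heq, hpartial.eventually_apply_implicitFunction one_ne_zero hinv] with y hy hψy
  rw [hy, hψy, hcrit]

lemma hasFDerivAt_graph {f : E × 𝕜 → G} (hf : DifferentiableAt 𝕜 f (x, t x))
    (ht : DifferentiableAt 𝕜 t x) :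
    HasFDerivAt (fun y => f (y, t y)) (fderiv 𝕜 f (x, t x) ∘L (.prod (.id 𝕜 E) (fderiv 𝕜 t x))) x :=
  hf.hasFDerivAt.comp x ((hasFDerivAt_id x).prodMk ht.hasFDerivAt)

lemma fderiv_graph_of_critical {f : E × 𝕜 → G} (hf : DifferentiableAt 𝕜 f (x, t x))
    (ht : DifferentiableAt 𝕜 t x) (hcrit : fderiv 𝕜 f (x, t x) (0, 1) = 0) :
    fderiv 𝕜 (fun y => f (y, t y)) x = fderiv 𝕜 f (x, t x) ∘L .inl 𝕜 E 𝕜 := by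
  rw [(hasFDerivAt_graph hf ht).fderiv]
  ext u
  simpa [hcrit] using apply_prodMk_eq (fderiv 𝕜 f (x, t x)) u (fderiv 𝕜 t x u)

lemma fderiv_fderiv_apply_tangent_of_critical {f : E × 𝕜 → G} (hf : ContDiffAt 𝕜 2 f (x, t x))
    (ht : DifferentiableAt 𝕜 t x) (hcrit : ∀ᶠ y in 𝓝 x, fderiv 𝕜 f (y, t y) (0, 1) = 0) (u : E) :
    fderiv 𝕜 (fderiv 𝕜 f) (x, t x) (u, fderiv 𝕜 t x u) (0, 1) = 0 := by
  have hgraph := hasFDerivAt_graph (differentiableAt_fderiv hf) ht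
  have hzero := (hgraph.clm_apply (hasFDerivAt_const ((0 : E), (1 : 𝕜)) x)).unique
    ((hasFDerivAt_const (0 : G) x).congr_of_eventuallyEq hcrit)
  simpa using DFunLike.congr_fun hzero u

lemma fderiv_fderiv_graph_of_critical {f : E × 𝕜 → G} (hf : ContDiffAt 𝕜 2 f (x, t x))
    (ht : ContDiffAt 𝕜 1 t x) (hcrit : ∀ᶠ y in 𝓝 x, fderiv 𝕜 f (y, t y) (0, 1) = 0) (u v : E) :
    fderiv 𝕜 (fderiv 𝕜 fun y => f (y, t y)) x u v =
      fderiv 𝕜 (fderiv 𝕜 f) (x, t x) (u, fderiv 𝕜 t x u) (v, 0) := by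
  have hcont : ContinuousAt (fun y => (y, t y)) x := continuousAt_id.prodMk ht.continuousAt
  have henvelope : fderiv 𝕜 (fun y => f (y, t y)) =ᶠ[𝓝 x]
      fun y => fderiv 𝕜 f (y, t y) ∘L .inl 𝕜 E 𝕜 := by
    filter_upwards [hcont.eventually (hf.eventually (by simp)), ht.eventually (by simp), hcrit]
      with y hfy hty hy using fderiv_graph_of_critical (hfy.differentiableAt two_ne_zero)
        (hty.differentiableAt one_ne_zero) hy
  have hgraph := hasFDerivAt_graph (differentiableAt_fderiv hf) (ht.differentiableAt one_ne_zero)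
  rw [henvelope.fderiv_eq, (hgraph.clm_comp (hasFDerivAt_const _ x)).fderiv]
  simp

lemma fderiv_fderiv_graph_eq_schurComplement {f : E × 𝕜 → 𝕜} (hf : ContDiffAt 𝕜 2 f (x, t x))
    (ht : ContDiffAt 𝕜 1 t x) (hcrit : ∀ᶠ y in 𝓝 x, fderiv 𝕜 f (y, t y) (0, 1) = 0)
    (hnondeg : fderiv 𝕜 (fderiv 𝕜 f) (x, t x) (0, 1) (0, 1) ≠ 0) (u v : E) :
    fderiv 𝕜 (fderiv 𝕜 fun y => f (y, t y)) x u v =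
      fderiv 𝕜 (fderiv 𝕜 f) (x, t x) (u, 0) (v, 0) -
        fderiv 𝕜 (fderiv 𝕜 f) (x, t x) (u, 0) (0, 1) *
          fderiv 𝕜 (fderiv 𝕜 f) (x, t x) (0, 1) (v, 0) /
            fderiv 𝕜 (fderiv 𝕜 f) (x, t x) (0, 1) (0, 1) := by
  have htangent :=
    fderiv_fderiv_apply_tangent_of_critical hf (ht.differentiableAt one_ne_zero) hcrit u
  rw [fderiv_fderiv_graph_of_critical hf ht hcrit]
  set f'' := fderiv 𝕜 (fderiv 𝕜 f) (x, t x)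
  rw [apply_prodMk_eq f''] at htangent ⊢
  simp only [_root_.add_apply, _root_.smul_apply, smul_eq_mul] at htangent ⊢
  field_simp
  linear_combination f'' (0, 1) (v, 0) * htangent

end CriticalBranch

section Hessian

open scoped Topology

variable {n : ℕ}

lemma hessianMatrix_apply {m : ℕ} (v : (Fin m → ℝ) → ℝ) (x : Fin m → ℝ) (i j : Fin m) :
    hessianMatrix v x i j = fderiv ℝ (fderiv ℝ v) x (Pi.single i 1) (Pi.single j 1) := by
  simp [hessianMatrix, iteratedFDeriv_two_apply]

lemma isSymm_hessianMatrix {m : ℕ} {v : (Fin m → ℝ) → ℝ} {x : Fin m → ℝ}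
    (hv : ContDiffAt ℝ 2 v x) : (hessianMatrix v x).IsSymm := by
  ext i j
  simpa only [transpose_apply, hessianMatrix_apply] using hv.isSymmSndFDerivAt (by simp) _ _

/-- The coordinates `(x, t) ↦ (t, x)` splitting space-time `ℝⁿ⁺¹` into space and time. Space comes
first on the left, so that time is the variable solved for by the implicit function theorem. -/
def spaceTimeEquiv (n : ℕ) : ((Fin n → ℝ) × ℝ) ≃L[ℝ] (Fin (n + 1) → ℝ) :=
  (ContinuousLinearEquiv.prodComm ℝ (Fin n → ℝ) ℝ).trans (Fin.consEquivL ℝ fun _ => ℝ)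

lemma spaceTimeEquiv_apply (x : Fin n → ℝ) (s : ℝ) : spaceTimeEquiv n (x, s) = Fin.cons s x :=
  rfl

lemma spaceTimeEquiv_zero_one : spaceTimeEquiv n (0, 1) = Pi.single 0 1 := by
  ext i
  cases i using Fin.cases <;> simp [spaceTimeEquiv_apply]

lemma spaceTimeEquiv_single_zero (j : Fin n) :
    spaceTimeEquiv n (Pi.single j 1, 0) = Pi.single j.succ 1 := by
  ext i
  cases i using Fin.cases <;> simp [spaceTimeEquiv_apply, Pi.single_apply]

lemma fderiv_fderiv_comp_equiv {𝕜 E F G : Type*} [NontriviallyNormedField 𝕜]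
    [NormedAddCommGroup E] [NormedSpace 𝕜 E] [NormedAddCommGroup F] [NormedSpace 𝕜 F]
    [NormedAddCommGroup G] [NormedSpace 𝕜 G] (f : F → G) (e : E ≃L[𝕜] F) (p u v : E) :
    fderiv 𝕜 (fderiv 𝕜 (f ∘ e)) p u v = fderiv 𝕜 (fderiv 𝕜 f) (e p) (e u) (e v) := by
  have h := e.iteratedFDerivWithin_comp_right f uniqueDiffOn_univ (Set.mem_univ (e p)) 2
  simpa [iteratedFDerivWithin_univ, iteratedFDeriv_two_apply] using DFunLike.congr_fun h ![u, v]

lemma fderiv_comp_spaceTimeEquiv (f : (Fin (n + 1) → ℝ) → ℝ) (p : (Fin n → ℝ) × ℝ) :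
    fderiv ℝ (f ∘ spaceTimeEquiv n) p (0, 1) = fderiv ℝ f (spaceTimeEquiv n p) (Pi.single 0 1) := by
  rw [(spaceTimeEquiv n).comp_right_fderiv, ← spaceTimeEquiv_zero_one]
  rfl

lemma fderiv_fderiv_comp_spaceTimeEquiv (f : (Fin (n + 1) → ℝ) → ℝ) (p : (Fin n → ℝ) × ℝ) :
    fderiv ℝ (fderiv ℝ (f ∘ spaceTimeEquiv n)) p (0, 1) (0, 1) =
      hessianMatrix f (spaceTimeEquiv n p) 0 0 := by
  rw [fderiv_fderiv_comp_equiv, spaceTimeEquiv_zero_one, hessianMatrix_apply]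

lemma contDiffAt_comp_spaceTimeEquiv {f : (Fin (n + 1) → ℝ) → ℝ} {p : (Fin n → ℝ) × ℝ}
    (hf : ContDiffAt ℝ 2 f (spaceTimeEquiv n p)) : ContDiffAt ℝ 2 (f ∘ spaceTimeEquiv n) p :=
  hf.comp p (spaceTimeEquiv n).contDiff.contDiffAt

variable {f : (Fin (n + 1) → ℝ) → ℝ} {t : (Fin n → ℝ) → ℝ} {x : Fin n → ℝ}

lemma hessianMatrix_graph (hf : ContDiffAt ℝ 2 f (Fin.cons (t x) x)) (ht : ContDiffAt ℝ 1 t x)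
    (hcrit : ∀ᶠ y in 𝓝 x, fderiv ℝ f (Fin.cons (t y) y) (Pi.single 0 1) = 0)
    (hnondeg : hessianMatrix f (Fin.cons (t x) x) 0 0 ≠ 0) :
    hessianMatrix (fun y => f (Fin.cons (t y) y)) x =
      schurComplement (hessianMatrix f (Fin.cons (t x) x)) := by
  ext i j
  have h := fderiv_fderiv_graph_eq_schurComplement
    (contDiffAt_comp_spaceTimeEquiv (p := (x, t x)) hf) ht
    (by simpa only [fderiv_comp_spaceTimeEquiv, spaceTimeEquiv_apply] using hcrit)
    (by simpa only [fderiv_fderiv_comp_spaceTimeEquiv, spaceTimeEquiv_apply] using hnondeg)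
    (Pi.single i 1) (Pi.single j 1)
  simp only [fderiv_fderiv_comp_equiv, spaceTimeEquiv_zero_one, spaceTimeEquiv_single_zero,
    ← hessianMatrix_apply] at h
  exact h

lemma contDiffAt_and_eventually_critical_cons (hf : ContDiffAt ℝ 2 f (Fin.cons (t x) x))
    (hcrit : fderiv ℝ f (Fin.cons (t x) x) (Pi.single 0 1) = 0)
    (hnondeg : hessianMatrix f (Fin.cons (t x) x) 0 0 ≠ 0)
    (hunique : ∀ᶠ p in 𝓝 (Fin.cons (t x) x : Fin (n + 1) → ℝ),
      fderiv ℝ f p (Pi.single 0 1) = 0 → t (Fin.tail p) = p 0) :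
    ContDiffAt ℝ 1 t x ∧ ∀ᶠ y in 𝓝 x, fderiv ℝ f (Fin.cons (t y) y) (Pi.single 0 1) = 0 := by
  have hunique' : ∀ᶠ p in 𝓝 (x, t x),
      fderiv ℝ f (spaceTimeEquiv n p) (Pi.single 0 1) = 0 → t p.1 = p.2 :=
    (spaceTimeEquiv n).continuous.continuousAt (x := (x, t x)) |>.eventually hunique
  simpa only [fderiv_comp_spaceTimeEquiv, spaceTimeEquiv_apply] using
    contDiffAt_and_eventually_critical
      (contDiffAt_comp_spaceTimeEquiv (p := (x, t x)) hf)
      (by simpa only [fderiv_comp_spaceTimeEquiv, spaceTimeEquiv_apply] using hcrit)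
      (by simpa only [fderiv_fderiv_comp_spaceTimeEquiv, spaceTimeEquiv_apply] using hnondeg)
      (by simpa only [fderiv_comp_spaceTimeEquiv] using hunique')

theorem angle_hessian_formula_general (hf : ContDiffAt ℝ 2 f (Fin.cons (t x) x))
    (hcrit : fderiv ℝ f (Fin.cons (t x) x) (Pi.single 0 1) = 0)
    (hnondeg : hessianMatrix f (Fin.cons (t x) x) 0 0 ≠ 0)
    (hunique : ∀ᶠ p in 𝓝 (Fin.cons (t x) x : Fin (n + 1) → ℝ),
      fderiv ℝ f p (Pi.single 0 1) = 0 → t (Fin.tail p) = p 0) :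
    liftedAngle (hessianMatrix (fun y => f (Fin.cons (t y) y)) x) =
      spaceTimeAngle (hessianMatrix f (Fin.cons (t x) x)) -
        Real.sign (hessianMatrix f (Fin.cons (t x) x) 0 0) * (π / 2) := by
  obtain ⟨ht, hcrit_near⟩ := contDiffAt_and_eventually_critical_cons hf hcrit hnondeg hunique
  rw [hessianMatrix_graph hf ht hcrit_near hnondeg,
    spaceTimeAngle_eq_liftedAngle_schurComplement_add (isSymm_hessianMatrix hf) hnondeg,
    add_sub_cancel_right]

end Hessian

section FiberwiseMinimum

open scoped Topology

variable {n : ℕ} {f : (Fin (n + 1) → ℝ) → ℝ} {t : (Fin n → ℝ) → ℝ} {x : Fin n → ℝ} {s : ℝ}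
  {I : Set ℝ} {D : Set (Fin n → ℝ)}

lemma hasDerivAt_cons (s : ℝ) (x : Fin n → ℝ) :
    HasDerivAt (fun r => (Fin.cons r x : Fin (n + 1) → ℝ)) (Pi.single 0 1) s := by
  have hcons : (Pi.single 0 1 : Fin (n + 1) → ℝ) = Fin.cons 1 0 := by
    rw [← spaceTimeEquiv_zero_one, spaceTimeEquiv_apply]
  rw [hcons]
  exact (hasDerivAt_id s).finCons (hasDerivAt_const s x)

lemma hasDerivAt_comp_cons (hf : DifferentiableAt ℝ f (Fin.cons s x)) :
    HasDerivAt (fun r => f (Fin.cons r x)) (fderiv ℝ f (Fin.cons s x) (Pi.single 0 1)) s :=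
  hf.hasFDerivAt.comp_hasDerivAt s (hasDerivAt_cons s x)

lemma fderiv_cons_eq_zero_of_isMinOn (hf : DifferentiableAt ℝ f (Fin.cons s x)) (hI : I ∈ 𝓝 s)
    (hmin : IsMinOn (fun r => f (Fin.cons r x)) I s) :
    fderiv ℝ f (Fin.cons s x) (Pi.single 0 1) = 0 :=
  (hmin.isLocalMin hI).hasDerivAt_eq_zero (hasDerivAt_comp_cons hf)

lemma strictMonoOn_fderiv_cons (hI : Convex ℝ I) (hf : ∀ s ∈ I, ContDiffAt ℝ 2 f (Fin.cons s x))
    (hconvex : ∀ s ∈ I, 0 < hessianMatrix f (Fin.cons s x) 0 0) :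
    StrictMonoOn (fun s => fderiv ℝ f (Fin.cons s x) (Pi.single 0 1)) I := by
  have hderiv (s) (hs : s ∈ I) : HasDerivAt (fun r => fderiv ℝ f (Fin.cons r x) (Pi.single 0 1))
      (hessianMatrix f (Fin.cons s x) 0 0) s := by
    rw [hessianMatrix_apply, ← fderiv_fderiv_apply (hf s hs)]
    exact hasDerivAt_comp_cons
      ((contDiffAt_fderiv_apply (hf s hs) _).differentiableAt one_ne_zero)
  refine strictMonoOn_of_deriv_pos hI (HasDerivAt.continuousOn hderiv) fun s hs => ?_
  rw [(hderiv s (interior_subset hs)).deriv]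
  exact hconvex s (interior_subset hs)

lemma isOpen_spaceTime (hI : IsOpen I) (hD : IsOpen D) :
    IsOpen {y : Fin (n + 1) → ℝ | y 0 ∈ I ∧ Fin.tail y ∈ D} :=
  (hI.preimage (continuous_apply 0)).inter
    (hD.preimage (continuous_pi fun i => continuous_apply i.succ))

lemma eventually_eq_of_injOn {α : Type*} {φ : (Fin (n + 1) → ℝ) → α} {c : α} (hI : IsOpen I)
    (hD : IsOpen D) (hinj : ∀ y ∈ D, I.InjOn fun s => φ (Fin.cons s y)) (ht : ∀ y ∈ D, t y ∈ I)
    (hc : ∀ y ∈ D, φ (Fin.cons (t y) y) = c) (hx : x ∈ D) :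
    ∀ᶠ p in 𝓝 (Fin.cons (t x) x : Fin (n + 1) → ℝ), φ p = c → t (Fin.tail p) = p 0 := by
  filter_upwards [(isOpen_spaceTime hI hD).mem_nhds ⟨ht x hx, hx⟩] with p ⟨hp0, hp⟩ hφp
  refine hinj _ hp (ht _ hp) hp0 ?_
  simp only [hc _ hp, Fin.cons_self_tail, hφp]

end FiberwiseMinimum

/-- Under the hypotheses of the minimum lemma, for all `x ∈ D`,
`θ̃(∇²g(x)) = Θ̃(∇²f(t(x),x)) − π/2`. -/
theorem angle_hessian_formula (n : ℕ)
    (I : Set ℝ) (hIopen : IsOpen I) (hIconv : Convex ℝ I) (hIne : I.Nonempty)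
    (D : Set (Fin n → ℝ)) (hDopen : IsOpen D) (hDconn : IsConnected D)
    (f : (Fin (n+1) → ℝ) → ℝ)
    (hf : ContDiffOn ℝ 2 f {y | y 0 ∈ I ∧ Fin.tail y ∈ D})
    (hftt : ∀ y ∈ {y : Fin (n+1) → ℝ | y 0 ∈ I ∧ Fin.tail y ∈ D},
      0 < hessianMatrix f y 0 0)
    (tfun : (Fin n → ℝ) → ℝ) (htI : ∀ x ∈ D, tfun x ∈ I)
    (hmin : ∀ x ∈ D, ∀ t ∈ I, f (Fin.cons (tfun x) x) ≤ f (Fin.cons t x))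
    (g : (Fin n → ℝ) → ℝ) (hg : ∀ x, g x = f (Fin.cons (tfun x) x)) :
    ∀ x ∈ D,
      liftedAngle (hessianMatrix g x) =
        spaceTimeAngle (hessianMatrix f (Fin.cons (tfun x) x)) - π / 2 := by
  obtain rfl : g = fun x => f (Fin.cons (tfun x) x) := funext hg
  have hfAt : ∀ x ∈ D, ∀ t ∈ I, ContDiffAt ℝ 2 f (Fin.cons t x) := fun x hx t ht =>
    hf.contDiffAt ((isOpen_spaceTime hIopen hDopen).mem_nhds ⟨ht, hx⟩)
  have hconvex : ∀ x ∈ D, ∀ t ∈ I, 0 < hessianMatrix f (Fin.cons t x) 0 0 := fun x hx t ht =>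
    hftt _ ⟨ht, hx⟩
  have hcrit : ∀ x ∈ D, fderiv ℝ f (Fin.cons (tfun x) x) (Pi.single 0 1) = 0 := fun x hx =>
    fderiv_cons_eq_zero_of_isMinOn ((hfAt x hx _ (htI x hx)).differentiableAt two_ne_zero)
      (hIopen.mem_nhds (htI x hx)) (hmin x hx)
  have hinj : ∀ x ∈ D, I.InjOn fun t => fderiv ℝ f (Fin.cons t x) (Pi.single 0 1) := fun x hx =>
    (strictMonoOn_fderiv_cons hIconv (hfAt x hx) (hconvex x hx)).injOn
  intro x hx
  have hpos := hconvex x hx _ (htI x hx)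
  rw [angle_hessian_formula_general (hfAt x hx _ (htI x hx)) (hcrit x hx) hpos.ne'
    (eventually_eq_of_injOn hIopen hDopen hinj htI hcrit hx),
    Real.sign_of_pos hpos, one_mul]
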